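/- With arithmetic mod 10, let T₄ and T₅ be the families of 4-element subsets of ℤ/10ℤ defined by T₄ = {{2i, 2i+1, 2i+2, 2i+4}, {2i+1, 2i+2, 2i+4, 2i+5}, {2i, 2i+2, 2i+3, 2i+4} : i ∈ ℤ/10ℤ} and T₅ = {{2i+1, 2i+2, 2i+3, 2i+5}, {2i, 2i+1, 2i+3, 2i+4}, {2i+1, 2i+3, 2i+4, 2i+5} : i ∈ ℤ/10ℤ}. Then the set of 3-element subsets of ℤ/10ℤ contained in exactly one member of T₄ equals the set of 3-element subsets contained in exactly one member of T₅, and this common boundary is exactly the set of twenty triangles {i, i+1, i+4} and {i, i+3, i+4}, i ∈ ℤ/10ℤ (the 10-vertex triangulated torus τ₁). That is, ∂T₄ = ∂T₅ = τ₁. -/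

import Mathlib

/-- The family `T₄` of fifteen 4-element subsets `{2i, 2i+1, 2i+2, 2i+4}`,
`{2i+1, 2i+2, 2i+4, 2i+5}`, `{2i, 2i+2, 2i+3, 2i+4}` of `ℤ/10ℤ`. -/
def torusT₄ : Finset (Finset (ZMod 10)) :=
  Finset.univ.image (fun i : ZMod 10 => {2*i, 2*i + 1, 2*i + 2, 2*i + 4}) ∪
  Finset.univ.image (fun i : ZMod 10 => {2*i + 1, 2*i + 2, 2*i + 4, 2*i + 5}) ∪
  Finset.univ.image (fun i : ZMod 10 => {2*i, 2*i + 2, 2*i + 3, 2*i + 4})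

/-- The family `T₅` of fifteen 4-element subsets `{2i+1, 2i+2, 2i+3, 2i+5}`,
`{2i, 2i+1, 2i+3, 2i+4}`, `{2i+1, 2i+3, 2i+4, 2i+5}` of `ℤ/10ℤ`. -/
def torusT₅ : Finset (Finset (ZMod 10)) :=
  Finset.univ.image (fun i : ZMod 10 => {2*i + 1, 2*i + 2, 2*i + 3, 2*i + 5}) ∪
  Finset.univ.image (fun i : ZMod 10 => {2*i, 2*i + 1, 2*i + 3, 2*i + 4}) ∪
  Finset.univ.image (fun i : ZMod 10 => {2*i + 1, 2*i + 3, 2*i + 4, 2*i + 5})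

/-- The boundary of a family of facets: the 3-element subsets contained in exactly one
facet. -/
def facetBoundary (F : Finset (Finset (ZMod 10))) : Set (Finset (ZMod 10)) :=
  {t | t.card = 3 ∧ (F.filter (fun s => t ⊆ s)).card = 1}

/-- The 10-vertex triangulated torus `τ₁`: the twenty triangles `{i, i+1, i+4}` and
`{i, i+3, i+4}`, `i ∈ ℤ/10ℤ`. -/
def tau₁ : Set (Finset (ZMod 10)) :=
  {t | ∃ i : ZMod 10, t = {i, i + 1, i + 4} ∨ t = {i, i + 3, i + 4}}

/-!
Translation by `1` carries `T₄` to `T₅` and fixes `τ₁`, so only `∂T₄ = τ₁` is at stake, and there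
everything is invariant under even translations. Up to these, `T₄` has the three facets `0124`,
`1245`, `0234`, with twelve faces counted with multiplicity. Eight of these match in pairs: `124`
and `024` are each shared by two of the three facets, `012 + 2 = 234`, and `023 + 2 = 245`. The
other four, `014`, `125`, `145`, `034`, are free, and their even translates are the triangles of
`τ₁`.
-/

open Finset
open scoped Pointwise

theorem filter_vadd_subset_vadd {G α : Type*} [AddGroup G] [AddAction G α] [DecidableEq α]
    (a : G) (F : Finset (Finset α)) (t : Finset α) :
    {s ∈ a +ᵥ F | a +ᵥ t ⊆ s} = a +ᵥ {s ∈ F | t ⊆ s} := by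
  ext s
  simp only [mem_filter, ← neg_vadd_mem_iff, vadd_finset_subset_iff]

theorem exists_eq_two_mul_or_eq_two_mul_add_one {n : ℕ} (i : ZMod n) :
    ∃ k, i = 2 * k ∨ i = 2 * k + 1 := by
  obtain ⟨m, rfl⟩ := ZMod.intCast_surjective i
  obtain ⟨k, hk⟩ := Int.even_or_odd' m
  exact ⟨k, hk.imp (fun h => by simp [h]) (fun h => by simp [h])⟩

section Translation

variable {F B : Finset (Finset (ZMod 10))} {t : Finset (ZMod 10)} {A : Set (ZMod 10)}

theorem mem_facetBoundary : t ∈ facetBoundary F ↔ #t = 3 ∧ #{s ∈ F | t ⊆ s} = 1 :=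
  Iff.rfl

theorem vadd_mem_facetBoundary_vadd_iff (a : ZMod 10) :
    a +ᵥ t ∈ facetBoundary (a +ᵥ F) ↔ t ∈ facetBoundary F := by
  simp only [mem_facetBoundary, filter_vadd_subset_vadd, card_vadd_finset]

theorem facetBoundary_vadd (a : ZMod 10) (F : Finset (Finset (ZMod 10))) :
    facetBoundary (a +ᵥ F) = a +ᵥ facetBoundary F := by
  ext t
  rw [Set.mem_vadd_set_iff_neg_vadd_mem, ← vadd_mem_facetBoundary_vadd_iff a (F := F),
    vadd_neg_vadd]

theorem exists_subset_of_mem_facetBoundary (ht : t ∈ facetBoundary F) : ∃ s ∈ F, t ⊆ s := by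
  have facets_nonempty : {s ∈ F | t ⊆ s}.Nonempty := card_pos.mp (ht.2 ▸ one_pos)
  simpa only [filter_nonempty_iff] using facets_nonempty

theorem mem_facetBoundary_iff_exists_vadd (hF : ∀ a ∈ A, a +ᵥ F = F)
    (hB : ∀ s ∈ F, ∃ a ∈ A, ∃ b ∈ B, a +ᵥ b = s) :
    t ∈ facetBoundary F ↔
      ∃ a ∈ A, ∃ b ∈ B, ∃ u ∈ powersetCard 3 b, u ∈ facetBoundary F ∧ a +ᵥ u = t := by
  have vadd_mem_iff {a} (ha : a ∈ A) (u) : a +ᵥ u ∈ facetBoundary F ↔ u ∈ facetBoundary F := by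
    simpa only [hF a ha] using vadd_mem_facetBoundary_vadd_iff (F := F) (t := u) a
  constructor
  · intro ht
    obtain ⟨_, hs, hts⟩ := exists_subset_of_mem_facetBoundary ht
    obtain ⟨a, ha, b, hb, rfl⟩ := hB _ hs
    refine ⟨a, ha, b, hb, -a +ᵥ t, ?_, ?_, vadd_neg_vadd a t⟩
    · rw [mem_powersetCard, card_vadd_finset, ← subset_vadd_finset_iff]
      exact ⟨hts, ht.1⟩
    · rwa [← vadd_mem_iff ha, vadd_neg_vadd]
  · rintro ⟨a, ha, _, _, u, _, hu, rfl⟩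
    exact (vadd_mem_iff ha u).mpr hu

end Translation

theorem vadd_tau₁ (a : ZMod 10) : a +ᵥ tau₁ = tau₁ := by
  have vadd_mem (a : ZMod 10) {t} (ht : t ∈ tau₁) : a +ᵥ t ∈ tau₁ := by
    obtain ⟨i, rfl | rfl⟩ := ht
    · exact ⟨a + i, .inl (by simp [vadd_finset_insert, add_assoc])⟩
    · exact ⟨a + i, .inr (by simp [vadd_finset_insert, add_assoc])⟩
  ext t
  rw [Set.mem_vadd_set_iff_neg_vadd_mem]
  exact ⟨fun ht => vadd_neg_vadd a t ▸ vadd_mem a ht, vadd_mem (-a)⟩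

/-- Representatives of the facets of `T₄` modulo even translations. -/
def baseFacets₄ : Finset (Finset (ZMod 10)) :=
  {{0, 1, 2, 4}, {1, 2, 4, 5}, {0, 2, 3, 4}}

/-- Representatives of the triangles of `τ₁` modulo even translations, chosen among the faces of
`baseFacets₄`. -/
def baseTriangles : Finset (Finset (ZMod 10)) :=
  {{0, 1, 4}, {1, 2, 5}, {0, 3, 4}, {1, 4, 5}}

theorem mem_torusT₄_iff_exists_vadd {s : Finset (ZMod 10)} :
    s ∈ torusT₄ ↔ ∃ i : ZMod 10, ∃ b ∈ baseFacets₄, 2 * i +ᵥ b = s := by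
  simp [torusT₄, baseFacets₄, vadd_finset_insert, exists_or]

theorem two_mul_vadd_torusT₄ (i : ZMod 10) : 2 * i +ᵥ torusT₄ = torusT₄ := by
  ext s
  rw [← neg_vadd_mem_iff, mem_torusT₄_iff_exists_vadd, mem_torusT₄_iff_exists_vadd]
  refine (Equiv.addLeft i).exists_congr fun j => ?_
  simp only [eq_neg_vadd_iff, vadd_vadd, Equiv.coe_addLeft, mul_add]

theorem one_vadd_torusT₄ : (1 : ZMod 10) +ᵥ torusT₄ = torusT₅ := by
  decide +kernel

theorem mem_tau₁_iff_exists_vadd {t : Finset (ZMod 10)} :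
    t ∈ tau₁ ↔ ∃ i : ZMod 10, ∃ u ∈ baseTriangles, 2 * i +ᵥ u = t := by
  simp only [baseTriangles, mem_insert, mem_singleton, exists_eq_or_imp, exists_eq_left,
    vadd_finset_insert, vadd_finset_singleton, vadd_eq_add, add_zero]
  constructor
  · rintro ⟨i, ht⟩
    obtain ⟨k, rfl | rfl⟩ := exists_eq_two_mul_or_eq_two_mul_add_one i
    · obtain rfl | rfl := ht
      · exact ⟨k, .inl rfl⟩
      · exact ⟨k, .inr (.inr (.inl rfl))⟩
    · obtain rfl | rfl := ht
      · exact ⟨k, .inr (.inl (by norm_num [add_assoc]))⟩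
      · exact ⟨k, .inr (.inr (.inr (by norm_num [add_assoc])))⟩
  · rintro ⟨k, rfl | rfl | rfl | rfl⟩
    · exact ⟨2 * k, .inl rfl⟩
    · exact ⟨2 * k + 1, .inl (by norm_num [add_assoc])⟩
    · exact ⟨2 * k, .inr rfl⟩
    · exact ⟨2 * k + 1, .inr (by norm_num [add_assoc])⟩

theorem mem_facetBoundary_torusT₄_iff_mem_baseTriangles :
    ∀ b ∈ baseFacets₄, ∀ u ∈ powersetCard 3 b,
      (u ∈ facetBoundary torusT₄ ↔ u ∈ baseTriangles) := by
  simp only [mem_facetBoundary]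
  decide +kernel

theorem exists_baseFacet_of_mem_baseTriangles :
    ∀ u ∈ baseTriangles, ∃ b ∈ baseFacets₄, u ∈ powersetCard 3 b := by
  decide +kernel

theorem facetBoundary_torusT₄ : facetBoundary torusT₄ = tau₁ := by
  have even_invariant : ∀ a ∈ Set.range (2 * · : ZMod 10 → ZMod 10), a +ᵥ torusT₄ = torusT₄ :=
    Set.forall_mem_range.mpr two_mul_vadd_torusT₄
  have covered : ∀ s ∈ torusT₄, ∃ a ∈ Set.range (2 * · : ZMod 10 → ZMod 10),
      ∃ b ∈ baseFacets₄, a +ᵥ b = s := fun s hs => by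
    simpa only [Set.exists_range_iff] using mem_torusT₄_iff_exists_vadd.mp hs
  ext t
  rw [mem_facetBoundary_iff_exists_vadd even_invariant covered, mem_tau₁_iff_exists_vadd,
    Set.exists_range_iff]
  refine exists_congr fun i => ⟨?_, ?_⟩
  · rintro ⟨b, hb, u, hub, hu, rfl⟩
    exact ⟨u, (mem_facetBoundary_torusT₄_iff_mem_baseTriangles b hb u hub).mp hu, rfl⟩
  · rintro ⟨u, hu, rfl⟩
    obtain ⟨b, hb, hub⟩ := exists_baseFacet_of_mem_baseTriangles u hu
    exact ⟨b, hb, u, hub, (mem_facetBoundary_torusT₄_iff_mem_baseTriangles b hb u hub).mpr hu, rfl⟩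

theorem facetBoundary_torusT₅ : facetBoundary torusT₅ = tau₁ := by
  rw [← one_vadd_torusT₄, facetBoundary_vadd, facetBoundary_torusT₄, vadd_tau₁]

/-- The set of triangles contained in exactly one member of `T₄` equals the set of
triangles contained in exactly one member of `T₅`, and this common boundary is exactly the
10-vertex triangulated torus `τ₁`:  `∂T₄ = ∂T₅ = τ₁`. -/
theorem solid_tori_common_boundary :
    facetBoundary torusT₄ = facetBoundary torusT₅ ∧ facetBoundary torusT₄ = tau₁ :=
  ⟨facetBoundary_torusT₄.trans facetBoundary_torusT₅.symm, facetBoundary_torusT₄⟩
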